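/- arXiv:2107.03753 — 4 statements merged into one kernel-verified Lean document; each statement's English description precedes it below -/
import Mathlib

section
/- There exists λ ∈ k \ {0,1} such that: (i) d_i^{⊗p}(t_λ) = 0 for every i ∈ {0,1,2,3}; and (ii) there is no Z/pZ-invariant element u ∈ (k^4)^{⊗p} satisfying d_0^{⊗p}(u) = t_λ and d_i^{⊗p}(u) = 0 for i = 1,2,3,4. (That is, t_λ represents a non-trivial homology class of the normalized chain complex of the simplicial vector space of cyclic-power invariants.) -/
/-!
In coordinates indexed by words, `t_λ` has the coordinate `tr (X_{w 1} ⋯ X_{w p})` at `w`, where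
`X_1 = -2e + λh`, `X_2 = (1 - λ)h`, `X_3 = λ(h + 2f)`. For each face `d₀, …, d₃` the resulting
traceless matrices share an eigenvector, so a product of `p` of them (`p` is odd) has trace zero
(`trace_eq_zero`); this gives the vanishing of the faces, for every `λ`.

For non-triviality a functional on cycles is used that kills boundaries. Let `Phi w` be the average
position of the letter `1` in `w` minus that of the letter `3` (`0` and `2` as elements of `Fin 3`)
if `w` uses all three letters, and zero otherwise. As the positions of all letters sum to zero modulo `p`, complementary sets of
positions have equal averages, whence `Phi` is a cocycle (`cocycle`), and it is invariant under
rotation. The functional is the sum of `Phi w` times the `w`-coordinate over one word `w` in each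
rotation orbit; it is written with a weight `psi` whose rotations add up to `Phi`. Double counting
over rotations shows that it vanishes on `d₀ u` for `u` invariant and killed by the other faces
(`key`).

On `t_λ` the functional is a polynomial in `λ` of degree less than `p` (`natDegree_polyQ`),
vanishing at `0` and `1`. Its linear coefficient is a sum over words with one letter `1` and one
letter `3`, and equals `2` (`eval_polyQ1_eq`). Such a polynomial cannot vanish on all of `k`, so
it is nonzero at some `λ` different from `0` and `1`.
-/

open scoped TensorProduct
open PiTensorProduct

noncomputable section

/-- The `p`-th tensor power of `R^n`. -/
abbrev TP (R : Type) [CommRing R] (p n : ℕ) : Type :=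
  ⨂[R] (_ : Fin p), (Fin n → R)

/-- The cyclic permutation `σ` of the tensor factors,
`σ (w₁ ⊗ ⋯ ⊗ w_p) = w_p ⊗ w₁ ⊗ ⋯ ⊗ w_{p-1}`; it generates the action of `ℤ/pℤ`. -/
def cyc (R : Type) [CommRing R] (p n : ℕ) : TP R p n ≃ₗ[R] TP R p n :=
  PiTensorProduct.reindex R (fun _ : Fin p => (Fin n → R)) (finRotate p)

/-- The matrices `G₁ = e`, `G₂ = h`, `G₃ = f`. -/
def stdG (R : Type) [CommRing R] : Fin 3 → Matrix (Fin 2) (Fin 2) R :=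
  ![!![0, 1; 0, 0], !![1, 0; 0, -1], !![0, 0; 1, 0]]

/-- `τ_λ` on the standard basis vectors: `τ_λ(b₁) = (-2,0,0)`, `τ_λ(b₂) = (λ,1-λ,λ)`,
`τ_λ(b₃) = (0,0,2λ)`. -/
def tau (R : Type) [CommRing R] (l : R) : Fin 3 → (Fin 3 → R) :=
  ![![-2, 0, 0], ![l, 1 - l, l], ![0, 0, 2 * l]]

/-- `t_λ = Σ_w tr(G_{w 1} ⋯ G_{w p}) • τ_λ(b_{w 1}) ⊗ ⋯ ⊗ τ_λ(b_{w p})`. -/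
def tEl (R : Type) [CommRing R] (p : ℕ) (l : R) : TP R p 3 :=
  ∑ w : Fin p → Fin 3,
    (List.ofFn fun i => stdG R (w i)).prod.trace • tprod R fun i => tau R l (w i)

/-- The matrices of the face maps `d₀, d₁, d₂, d₃ : k³ → k²`. -/
def d32 (R : Type) [CommRing R] : Fin 4 → Matrix (Fin 2) (Fin 3) R :=
  ![!![0, 1, 0; 0, 0, 1], !![1, 1, 0; 0, 0, 1], !![1, 0, 0; 0, 1, 1], !![1, 0, 0; 0, 1, 0]]

/-- The matrices of the face maps `d₀, d₁, d₂, d₃, d₄ : k⁴ → k³`. -/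
def d43 (R : Type) [CommRing R] : Fin 5 → Matrix (Fin 3) (Fin 4) R :=
  ![!![0, 1, 0, 0; 0, 0, 1, 0; 0, 0, 0, 1], !![1, 1, 0, 0; 0, 0, 1, 0; 0, 0, 0, 1],
    !![1, 0, 0, 0; 0, 1, 1, 0; 0, 0, 0, 1], !![1, 0, 0, 0; 0, 1, 0, 0; 0, 0, 1, 1],
    !![1, 0, 0, 0; 0, 1, 0, 0; 0, 0, 1, 0]]

/-- `g^{⊗p}`, the `p`-th tensor power of the linear map with matrix `A`. -/
def tpow (R : Type) [CommRing R] (p : ℕ) {m n : ℕ} (A : Matrix (Fin m) (Fin n) R) :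
    TP R p n →ₗ[R] TP R p m :=
  PiTensorProduct.map fun _ => A.mulVecLin

/-! ### The cyclic cocycle on words -/

/-- The average, in `k`, of the positions in `s`. -/
def mean (k : Type) [Field k] {p : ℕ} (s : Finset (Fin p)) : k :=
  (∑ i ∈ s, ((i : ℕ) : k)) / (s.card : k)

/-- The set of positions at which the word `w` has the letter `c`. -/
def fib {p n : ℕ} (w : Fin p → Fin n) (c : Fin n) : Finset (Fin p) :=
  Finset.univ.filter fun i => w i = c

/-- The word `w` rotated by `j` places. -/
def rot {q n : ℕ} (j : Fin (q + 1)) (w : Fin (q + 1) → Fin n) : Fin (q + 1) → Fin n :=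
  fun i => w (i + j)

/-- The cyclically invariant cocycle on words in three letters: the average position of the first
letter minus that of the third on words in which all three letters occur, zero on other words. -/
def Phi (k : Type) [Field k] {p : ℕ} (w : Fin p → Fin 3) : k :=
  if Function.Surjective w then mean k (fib w 0) - mean k (fib w 2) else 0

/-- A function on words whose sum over all rotations is `Phi`. It is `Phi` weighted by the
normalized indicator of the words that begin with the third letter; the count in the denominator
is a unit of `k` wherever `Phi` is nonzero. -/
def psi (k : Type) [Field k] {q : ℕ} (w : Fin (q + 1) → Fin 3) : k :=
  if w 0 = 2 then Phi k w / ((fib w 2).card : k) else 0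

@[simp]
lemma mem_fib {p n : ℕ} {w : Fin p → Fin n} {c : Fin n} {i : Fin p} : i ∈ fib w c ↔ w i = c := by
  unfold fib
  exact Finset.mem_filter.trans (by simp)

lemma psi_eq_zero {k : Type} [Field k] {q : ℕ} {w : Fin (q + 1) → Fin 3} {c : Fin 3}
    (h : ∀ i, w i ≠ c) : psi k w = 0 := by
  have : ¬ Function.Surjective w := fun hs => by
    obtain ⟨i, hi⟩ := hs c
    exact h i hi
  simp [psi, Phi, this]

section Words

variable {k : Type} [Field k] {q : ℕ} [CharP k (q + 1)]

lemma card_ne_zero' {s : Finset (Fin (q + 1))} (h0 : s.Nonempty) (h1 : s ≠ Finset.univ) :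
    (s.card : k) ≠ 0 := by
  intro h
  rw [CharP.cast_eq_zero_iff k (q + 1)] at h
  have h2 : s.card < q + 1 := by
    simpa using Finset.card_lt_card (Finset.ssubset_univ_iff.2 h1)
  exact absurd (Nat.le_of_dvd h0.card_pos h) (by omega)

lemma cast_add' (i j : Fin (q + 1)) : (((i + j : Fin (q + 1)) : ℕ) : k) = (i : ℕ) + (j : ℕ) := by
  rw [Fin.val_add, ← Nat.cast_add, CharP.cast_eq_iff_mod_eq k (q + 1), Nat.mod_mod]

lemma fib_card_rot {n : ℕ} (j : Fin (q + 1)) (w : Fin (q + 1) → Fin n) (c : Fin n) :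
    (fib (rot j w) c).card = (fib w c).card := by
  refine Finset.card_bij (fun i _ => i + j) ?_ ?_ ?_
  · intro a ha; simpa [rot] using ha
  · intro a _ b _ h; simpa using h
  · intro b hb; exact ⟨b - j, by simpa [rot] using hb, by simp⟩

/-- Rotating by `j` places shifts averages by `-j`; the wrap-around is invisible modulo `p`. -/
lemma mean_rot {n : ℕ} (j : Fin (q + 1)) (w : Fin (q + 1) → Fin n) (c : Fin n)
    (hc : ((fib w c).card : k) ≠ 0) :
    mean k (fib (rot j w) c) = mean k (fib w c) - (j : ℕ) := by
  have h : ∑ i ∈ fib w c, ((i : ℕ) : k) = ∑ i ∈ fib (rot j w) c, (((i : ℕ) : k) + (j : ℕ)) := by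
    symm
    refine Finset.sum_bij (fun i _ => i + j) ?_ ?_ ?_ ?_
    · intro a ha; simpa [rot] using ha
    · intro a _ b _ h; simpa using h
    · intro b hb; exact ⟨b - j, by simpa [rot] using hb, by simp⟩
    · intro a _; rw [cast_add']
  unfold mean
  rw [h, Finset.sum_add_distrib, fib_card_rot, Finset.sum_const, fib_card_rot, nsmul_eq_mul]
  field_simp
  ring

/-- Complementary sets of positions have the same average, because all positions together
sum to zero in odd characteristic. -/
lemma mean_compl (hq : 2 ≤ q) {s t : Finset (Fin (q + 1))} (hst : t = sᶜ) (h0 : s.Nonempty)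
    (h1 : t.Nonempty) : mean k s = mean k t := by
  subst hst
  have hs : (s.card : k) ≠ 0 := card_ne_zero' h0 (by rintro rfl; simp at h1)
  have ht : (sᶜ.card : k) ≠ 0 := card_ne_zero' h1 (by
    intro h; obtain ⟨x, hx⟩ := h0
    have : x ∈ sᶜ := h ▸ Finset.mem_univ x
    simp_all)
  have hc : (s.card : k) + (sᶜ.card : k) = 0 := by
    rw [← Nat.cast_add, Finset.card_add_card_compl, Fintype.card_fin, CharP.cast_eq_zero]
  have h2 : (2 : k) ≠ 0 := by
    have h := (CharP.cast_eq_zero_iff k (q + 1) 2).not.2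
      (fun h => absurd (Nat.le_of_dvd (by norm_num) h) (by omega))
    exact_mod_cast h
  have hsum : ∑ i ∈ s, ((i : ℕ) : k) + ∑ i ∈ sᶜ, ((i : ℕ) : k) = 0 := by
    rw [Finset.sum_add_sum_compl, Fin.sum_univ_eq_sum_range (fun i => (i : k)), ← Nat.cast_sum]
    have h := congrArg (Nat.cast : ℕ → k) (Finset.sum_range_id_mul_two (q + 1))
    rw [Nat.cast_mul, Nat.cast_mul, CharP.cast_eq_zero k (q + 1), zero_mul] at h
    exact (mul_eq_zero.1 h).resolve_right (by exact_mod_cast h2)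
  unfold mean
  rw [div_eq_div_iff hs ht, eq_neg_of_add_eq_zero_left hc, eq_neg_of_add_eq_zero_left hsum]
  ring

lemma fib_card_ne_zero {n : ℕ} {w : Fin (q + 1) → Fin n} {c d : Fin n} (hcd : c ≠ d)
    (hc : ∃ i, w i = c) (hd : ∃ i, w i = d) : ((fib w c).card : k) ≠ 0 := by
  obtain ⟨i, hi⟩ := hc
  obtain ⟨j, hj⟩ := hd
  refine card_ne_zero' ⟨i, by simp [hi]⟩ fun h => ?_
  have : j ∈ fib w c := h ▸ Finset.mem_univ j
  rw [mem_fib] at this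
  exact hcd (this.symm.trans hj)

lemma rot_surj {n : ℕ} (j : Fin (q + 1)) (w : Fin (q + 1) → Fin n) :
    Function.Surjective (rot j w) ↔ Function.Surjective w :=
  (Equiv.addRight j).surjective_comp w

lemma Phi_rot (j : Fin (q + 1)) (w : Fin (q + 1) → Fin 3) : Phi k (rot j w) = Phi k w := by
  unfold Phi
  by_cases h : Function.Surjective w
  · rw [if_pos h, if_pos ((rot_surj j w).2 h)]
    rw [mean_rot, mean_rot]
    · ring
    · exact fib_card_ne_zero (d := 0) (by decide) (h _) (h _)
    · exact fib_card_ne_zero (d := 1) (by decide) (h _) (h _)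
  · rw [if_neg h, if_neg (mt (rot_surj j w).1 h)]

lemma sum_psi_rot (w : Fin (q + 1) → Fin 3) : ∑ j, psi k (rot j w) = Phi k w := by
  have h : ∀ j, psi k (rot j w) = if w j = 2 then Phi k w / ((fib w 2).card : k) else 0 := by
    intro j
    unfold psi
    rw [Phi_rot, fib_card_rot]
    simp [rot]
  simp_rw [h]
  rw [← Finset.sum_filter, Finset.sum_const, nsmul_eq_mul]
  change ((fib w 2).card : k) * _ = _
  by_cases hw : Function.Surjective w
  · exact mul_div_cancel₀ _ (fib_card_ne_zero (d := 0) (by decide) (hw _) (hw _))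
  · simp [Phi, hw]

/-- The face of a word in four letters that identifies the first two letters. -/
def f1 : Fin 4 → Fin 3 := ![0, 0, 1, 2]

/-- The face of a word in four letters that identifies the two middle letters. -/
def f2 : Fin 4 → Fin 3 := ![0, 1, 1, 2]

/-- The face of a word in four letters that identifies the last two letters. -/
def f3 : Fin 4 → Fin 3 := ![0, 1, 2, 2]

/-- The cocycle identity for `Phi`. The two faces that delete the first or the last letter are
missing, since they do not apply to words containing both. -/
lemma cocycle (hq : 2 ≤ q) (v : Fin (q + 1) → Fin 4) (h0 : ∃ i, v i = 0) (h3 : ∃ i, v i = 3) :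
    - Phi k (f1 ∘ v) + Phi k (f2 ∘ v) - Phi k (f3 ∘ v) = 0 := by
  have hsurj : ∀ f : Fin 4 → Fin 3, f 0 = 0 → f 3 = 2 → (∃ i, f (v i) = 1) →
      Function.Surjective (f ∘ v) := by
    rintro f hf0 hf3 ⟨i, hi⟩ c
    obtain ⟨i0, h0⟩ := h0
    obtain ⟨i3, h3⟩ := h3
    fin_cases c
    exacts [⟨i0, by simp [h0, hf0]⟩, ⟨i, by simp [hi]⟩, ⟨i3, by simp [h3, hf3]⟩]
  have s1 : Function.Surjective (f1 ∘ v) ↔ ∃ i, v i = 2 := by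
    refine ⟨fun h => ?_, fun ⟨i, hi⟩ => hsurj f1 rfl rfl ⟨i, by simp [hi, f1]⟩⟩
    obtain ⟨i, hi⟩ := h 1
    refine ⟨i, ?_⟩
    simp only [Function.comp] at hi
    generalize v i = x at *; revert x; decide
  have s2 : Function.Surjective (f2 ∘ v) ↔ (∃ i, v i = 1) ∨ ∃ i, v i = 2 := by
    refine ⟨fun h => ?_, ?_⟩
    · obtain ⟨i, hi⟩ := h 1
      rw [← exists_or]
      refine ⟨i, ?_⟩
      simp only [Function.comp] at hi
      generalize v i = x at *; revert x; decide
    · rintro (⟨i, hi⟩ | ⟨i, hi⟩) <;> exact hsurj f2 rfl rfl ⟨i, by simp [hi, f2]⟩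
  have s3 : Function.Surjective (f3 ∘ v) ↔ ∃ i, v i = 1 := by
    refine ⟨fun h => ?_, fun ⟨i, hi⟩ => hsurj f3 rfl rfl ⟨i, by simp [hi, f3]⟩⟩
    obtain ⟨i, hi⟩ := h 1
    refine ⟨i, ?_⟩
    simp only [Function.comp] at hi
    generalize v i = x at *; revert x; decide
  have e12 : fib (f1 ∘ v) 2 = fib v 3 := by
    ext i; simp only [mem_fib, Function.comp]
    generalize v i = x; revert x; decide
  have e22 : fib (f2 ∘ v) 2 = fib v 3 := by
    ext i; simp only [mem_fib, Function.comp]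
    generalize v i = x; revert x; decide
  have e20 : fib (f2 ∘ v) 0 = fib v 0 := by
    ext i; simp only [mem_fib, Function.comp]
    generalize v i = x; revert x; decide
  have e30 : fib (f3 ∘ v) 0 = fib v 0 := by
    ext i; simp only [mem_fib, Function.comp]
    generalize v i = x; revert x; decide
  have ec : mean k (fib (f1 ∘ v) 0) = mean k (fib (f3 ∘ v) 2) := by
    refine mean_compl hq ?_ ?_ ?_
    · ext i; simp only [mem_fib, Function.comp,
        Finset.mem_compl]
      generalize v i = x; revert x; decide
    · obtain ⟨i, hi⟩ := h0
      exact ⟨i, by simp [hi, f1]⟩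
    · obtain ⟨i, hi⟩ := h3
      exact ⟨i, by simp [hi, f3]⟩
  have e10 : (¬ ∃ i, v i = 1) → fib (f1 ∘ v) 0 = fib v 0 := by
    intro h; push Not at h
    ext i; simp only [mem_fib, Function.comp]
    have := h i
    generalize v i = x at *; revert x; decide
  have e32 : (¬ ∃ i, v i = 2) → fib (f3 ∘ v) 2 = fib v 3 := by
    intro h; push Not at h
    ext i; simp only [mem_fib, Function.comp]
    have := h i
    generalize v i = x at *; revert x; decide
  unfold Phi
  simp only [s1, s2, s3, e12, e22, e20, e30]
  by_cases c1 : ∃ i, v i = 1 <;> by_cases c2 : ∃ i, v i = 2 <;>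
    simp only [c1, c2, if_true, if_false, or_true, or_false]
  · rw [ec]; ring
  · rw [e32 c2]; ring
  · rw [e10 c1]; ring
  · ring

/-- The pairing of `psi` with the face `d₀ u` vanishes when `u` is rotation invariant and is killed
by the other faces; `u` stands for the coordinates of a tensor, `hu` says `d₄ u = 0`, and `h1`,
`h2`, `h3` are the consequences of `d₁ u = d₂ u = d₃ u = 0`. -/
lemma key (hq : 2 ≤ q) (u : (Fin (q + 1) → Fin 4) → k) (hinv : ∀ j v, u (rot j v) = u v)
    (hu : ∀ v, (∀ i, v i ≠ 3) → u v = 0)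
    (h1 : ∑ v, psi k (f1 ∘ v) * u v = 0) (h2 : ∑ v, psi k (f2 ∘ v) * u v = 0)
    (h3 : ∑ v, psi k (f3 ∘ v) * u v = 0) :
    ∑ w : Fin (q + 1) → Fin 3, psi k w * u (Fin.succ ∘ w) = 0 := by
  -- on words without the letter `0`, the map `f1` is the inverse of `Fin.succ`
  have hA : ∑ w : Fin (q + 1) → Fin 3, psi k w * u (Fin.succ ∘ w) =
      ∑ v, (if ∀ i, v i ≠ 0 then psi k (f1 ∘ v) else 0) * u v := by
    refine Fintype.sum_of_injective (fun w => Fin.succ ∘ w) ?_ _ _ ?_ ?_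
    · exact (Fin.succ_injective _).comp_left
    · intro v hv
      rw [if_neg, zero_mul]
      intro h
      exact hv ⟨fun i => (v i).pred (h i), by ext i; simp⟩
    · intro w
      rw [if_pos (by intro i; simp)]
      congr 2
      ext i
      simp only [Function.comp]
      generalize w i = x
      revert x; decide
  set Psi : (Fin (q + 1) → Fin 4) → k := fun v =>
    (if ∀ i, v i ≠ 0 then psi k (f1 ∘ v) else 0) - psi k (f1 ∘ v) + psi k (f2 ∘ v)
      - psi k (f3 ∘ v) with hPsi
  have hB : ∑ w : Fin (q + 1) → Fin 3, psi k w * u (Fin.succ ∘ w) = ∑ v, Psi v * u v := by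
    have : ∑ v, Psi v * u v = ∑ v, (if ∀ i, v i ≠ 0 then psi k (f1 ∘ v) else 0) * u v
        - ∑ v, psi k (f1 ∘ v) * u v + ∑ v, psi k (f2 ∘ v) * u v
        - ∑ v, psi k (f3 ∘ v) * u v := by
      rw [← Finset.sum_sub_distrib, ← Finset.sum_add_distrib, ← Finset.sum_sub_distrib]
      exact Finset.sum_congr rfl fun v _ => by rw [hPsi]; ring
    rw [this, hA, h1, h2, h3]; ring
  have hPsi0 : ∀ v, (∀ i, v i ≠ 0) → Psi v = 0 := by
    intro v hv
    have e2 : psi k (f2 ∘ v) = 0 := psi_eq_zero (c := 0) fun i => by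
      have := hv i
      simp only [Function.comp]
      generalize v i = x at *; revert x; decide
    have e3 : psi k (f3 ∘ v) = 0 := psi_eq_zero (c := 0) fun i => by
      have := hv i
      simp only [Function.comp]
      generalize v i = x at *; revert x; decide
    simp only [hPsi, e2, e3]
    rw [if_pos hv]; ring
  -- on words containing both extreme letters, the rotations of the weight `th` sum to one, so that
  -- the sum of `Psi * u` can be replaced by one over the rotations of `Psi`
  set th : (Fin (q + 1) → Fin 4) → k := fun v =>
    if v 0 = 0 then 1 / ((fib v 0).card : k) else 0 with hth
  have hC : ∀ v, Psi v * u v = ∑ j, th (rot j v) * (Psi v * u v) := by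
    intro v
    by_cases c0 : ∃ i, v i = 0
    · by_cases c3 : ∃ i, v i = 3
      · have h : ∀ j, th (rot j v) = if v j = 0 then 1 / ((fib v 0).card : k) else 0 := by
          intro j
          simp only [hth]
          rw [fib_card_rot]
          simp [rot]
        rw [← Finset.sum_mul]
        simp_rw [h]
        rw [← Finset.sum_filter, Finset.sum_const, nsmul_eq_mul]
        change _ = ((fib v 0).card : k) * _ * _
        rw [mul_div_cancel₀ _ (fib_card_ne_zero (d := 3) (by decide) c0 c3), one_mul]
      · push Not at c3
        simp [hu v c3]
    · push Not at c0
      simp [hPsi0 v c0]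
  have hD : ∀ j, ∑ v, th (rot j v) * (Psi v * u v) = ∑ v, th v * (Psi (rot (-j) v) * u v) := by
    intro j
    let E : (Fin (q + 1) → Fin 4) ≃ (Fin (q + 1) → Fin 4) :=
      { toFun := rot j
        invFun := rot (-j)
        left_inv := fun v => by ext i; simp [rot]
        right_inv := fun v => by ext i; simp [rot] }
    refine Fintype.sum_equiv E _ _ fun v => ?_
    have : rot (-j) (rot j v) = v := by ext i; simp [rot]
    change _ = th (rot j v) * (Psi (rot (-j) (rot j v)) * u (rot j v))
    rw [this, hinv]
  rw [hB, Finset.sum_congr rfl fun v _ => hC v, Finset.sum_comm,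
    Finset.sum_congr rfl fun j _ => hD j, Finset.sum_comm]
  refine Finset.sum_eq_zero fun v _ => ?_
  rw [← Finset.mul_sum, ← Finset.sum_mul]
  by_cases c0 : v 0 = 0
  · by_cases c3 : ∃ i, v i = 3
    · have hz : ∑ j, Psi (rot (-j) v) = 0 := by
        have e0 : ∑ j, Psi (rot (-j) v) = ∑ j, Psi (rot j v) :=
          Fintype.sum_equiv (Equiv.neg _) _ _ fun j => rfl
        have e1 : ∀ j, Psi (rot j v) = - psi k (rot j (f1 ∘ v)) + psi k (rot j (f2 ∘ v))
            - psi k (rot j (f3 ∘ v)) := by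
          intro j
          have : ¬ ∀ i, rot j v i ≠ 0 := fun h => h (-j) (by simp [rot, c0])
          simp only [hPsi]
          rw [if_neg this, zero_sub]
          rfl
        rw [e0]
        simp_rw [e1]
        rw [Finset.sum_sub_distrib, Finset.sum_add_distrib, Finset.sum_neg_distrib, sum_psi_rot,
          sum_psi_rot, sum_psi_rot]
        exact cocycle hq v ⟨0, c0⟩ c3
      rw [hz]; ring
    · push Not at c3
      simp [hu v c3]
  · simp [hth, c0]

end Words

/-! ### Tensor coordinates and traces of words -/

section Coordinates

variable {R : Type} [CommRing R] {p m n : ℕ}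

/-- The coordinate of a tensor at a word, with respect to the standard basis. -/
def coord (R : Type) [CommRing R] {p n : ℕ} (w : Fin p → Fin n) : TP R p n →ₗ[R] R :=
  PiTensorProduct.lift ((MultilinearMap.mkPiAlgebra R (Fin p) R).compLinearMap
    fun i => LinearMap.proj (w i))

@[simp]
lemma coord_tprod (w : Fin p → Fin n) (x : Fin p → Fin n → R) :
    coord R w (tprod R x) = ∏ i, x i (w i) := by
  simp [coord]

lemma eq_sum_coord (u : TP R p n) :
    u = ∑ w, coord R w u • tprod R fun i => (Pi.single (w i) 1 : Fin n → R) := by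
  let g : TP R p n →ₗ[R] TP R p n :=
    ∑ w, (coord R w).smulRight (tprod R fun i => (Pi.single (w i) 1 : Fin n → R))
  have h : LinearMap.id = g := by
    refine PiTensorProduct.ext (MultilinearMap.ext fun x => ?_)
    have hx : x = fun i => ∑ c, x i c • (Pi.single c 1 : Fin n → R) := by
      ext i c; simp [Finset.sum_apply, Pi.single_apply]
    change tprod R x = g (tprod R x)
    conv_lhs => rw [hx]
    rw [MultilinearMap.map_sum]
    simp only [g, LinearMap.sum_apply, LinearMap.smulRight_apply, coord_tprod]
    refine Finset.sum_congr rfl fun w _ => ?_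
    rw [MultilinearMap.map_smul_univ]
  have := congrArg (fun f => f u) h
  simpa [g] using this

lemma coord_ext {u : TP R p n} (h : ∀ w, coord R w u = 0) : u = 0 := by
  rw [eq_sum_coord u]
  simp [h]

lemma coord_tpow (A : Matrix (Fin m) (Fin n) R) (u : TP R p n) (w : Fin p → Fin m) :
    coord R w (tpow R p A u) = ∑ v : Fin p → Fin n, (∏ i, A (w i) (v i)) * coord R v u := by
  let g : TP R p n →ₗ[R] R := ∑ v : Fin p → Fin n, (∏ i, A (w i) (v i)) • coord R v
  have h : (coord R w).comp (tpow R p A) = g := by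
    refine PiTensorProduct.ext (MultilinearMap.ext fun x => ?_)
    change coord R w (tpow R p A (tprod R x)) = g (tprod R x)
    simp only [g, LinearMap.sum_apply, LinearMap.smul_apply, coord_tprod, tpow,
      PiTensorProduct.map_tprod, Matrix.mulVecLin_apply, Matrix.mulVec, dotProduct, smul_eq_mul]
    rw [Finset.prod_univ_sum]
    simp [Finset.prod_mul_distrib]
  have := congrArg (fun f => f u) h
  simpa [g] using this

/-- Coordinates of the image under a map sending basis vectors to basis vectors. -/
lemma coord_tpow_fun (A : Matrix (Fin m) (Fin n) R) (f : Fin n → Fin m)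
    (hA : ∀ a b, A a b = if f b = a then 1 else 0) (u : TP R p n) (w : Fin p → Fin m) :
    coord R w (tpow R p A u) = ∑ v : Fin p → Fin n, if f ∘ v = w then coord R v u else 0 := by
  rw [coord_tpow]
  refine Finset.sum_congr rfl fun v _ => ?_
  simp only [hA]
  rw [Finset.prod_ite_zero]
  simp [funext_iff]

/-- Coordinates of the image under a transposed inclusion of basis vectors. -/
lemma coord_tpow_incl (A : Matrix (Fin m) (Fin n) R) (f : Fin m → Fin n)
    (hA : ∀ a b, A a b = if b = f a then 1 else 0) (u : TP R p n) (w : Fin p → Fin m) :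
    coord R w (tpow R p A u) = coord R (f ∘ w) u := by
  rw [coord_tpow, Finset.sum_eq_single (f ∘ w)]
  · simp [hA]
  · intro v _ hv
    simp only [hA]
    rw [Finset.prod_ite_zero, if_neg, zero_mul]
    intro h
    exact hv (funext fun i => h i (Finset.mem_univ i))
  · simp

lemma coord_cyc {q : ℕ} (u : TP R (q + 1) n) (w : Fin (q + 1) → Fin n) :
    coord R w (cyc R (q + 1) n u) = coord R (rot 1 w) u := by
  have h : (coord R w).comp (cyc R (q + 1) n).toLinearMap = coord R (rot 1 w) := by
    refine PiTensorProduct.ext (MultilinearMap.ext fun x => ?_)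
    change coord R w (cyc R (q + 1) n (tprod R x)) = coord R (rot 1 w) (tprod R x)
    simp only [cyc, PiTensorProduct.reindex_tprod, coord_tprod]
    refine (Fintype.prod_equiv (finRotate (q + 1)) _ _ fun i => ?_).symm
    simp [rot]
  exact congrArg (fun f => f u) h

lemma coord_rot {q : ℕ} (u : TP R (q + 1) n) (hu : cyc R (q + 1) n u = u) (j : Fin (q + 1))
    (w : Fin (q + 1) → Fin n) : coord R (rot j w) u = coord R w u := by
  have h1 : ∀ w : Fin (q + 1) → Fin n, coord R (rot 1 w) u = coord R w u := fun w => by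
    rw [← coord_cyc, hu]
  induction j using Fin.induction with
  | zero => congr 1; ext i; simp [rot]
  | succ j ih =>
    rw [← ih, ← h1 (rot j.castSucc w)]
    have : rot j.succ w = rot 1 (rot j.castSucc w) := by
      ext i
      simp only [rot]
      rw [add_assoc, ← Fin.coeSucc_eq_succ, add_comm (1 : Fin (q + 1))]
    rw [this]

lemma coord_tEl (l : R) (w : Fin p → Fin 3) :
    coord R w (tEl R p l) = ∑ v : Fin p → Fin 3,
      (List.ofFn fun i => stdG R (v i)).prod.trace * ∏ i, tau R l (v i) (w i) := by
  simp [tEl]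

/-- Expanding the trace of a product of linear combinations of `e`, `h`, `f`. -/
lemma trace_expand (x : Fin p → Fin 3 → R) :
    ∑ v : Fin p → Fin 3, (List.ofFn fun i => stdG R (v i)).prod.trace * ∏ i, x i (v i) =
      (List.ofFn fun i => ∑ c, x i c • stdG R c).prod.trace := by
  have h := MultilinearMap.map_sum (MultilinearMap.mkPiAlgebraFin R p (Matrix (Fin 2) (Fin 2) R))
    (fun i c => x i c • stdG R c)
  simp only [MultilinearMap.map_smul_univ, MultilinearMap.mkPiAlgebraFin_apply] at h
  rw [h, Matrix.trace_sum]
  refine Finset.sum_congr rfl fun v _ => ?_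
  rw [Matrix.trace_smul, smul_eq_mul, mul_comm]

end Coordinates

/-- A product of an odd number of traceless matrices with a common eigenvector `(α, β)` has trace
zero: each matrix acts by opposite scalars `a` and `-a` on the line spanned by the eigenvector and
on the quotient by that line (on which it acts through the row vector `(-β, α)`), hence so does
the product. -/
lemma trace_eq_zero {k : Type} [Field k] {α β : k} (hab : α ≠ 0 ∨ β ≠ 0) {p : ℕ} (hp : Odd p)
    (M : Fin p → Matrix (Fin 2) (Fin 2) k)
    (hM : ∀ i, ∃ a, M i 0 0 * α + M i 0 1 * β = a * α ∧ M i 1 0 * α + M i 1 1 * β = a * β ∧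
      -β * M i 0 0 + α * M i 1 0 = a * β ∧ -β * M i 0 1 + α * M i 1 1 = -(a * α)) :
    (List.ofFn M).prod.trace = 0 := by
  have key : ∀ (n : ℕ) (M : Fin n → Matrix (Fin 2) (Fin 2) k),
      (∀ i, ∃ a, M i 0 0 * α + M i 0 1 * β = a * α ∧ M i 1 0 * α + M i 1 1 * β = a * β ∧
      -β * M i 0 0 + α * M i 1 0 = a * β ∧ -β * M i 0 1 + α * M i 1 1 = -(a * α)) →
      ∃ P, (List.ofFn M).prod = P ∧ ∃ a, P 0 0 * α + P 0 1 * β = a * α ∧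
        P 1 0 * α + P 1 1 * β = a * β ∧ -β * P 0 0 + α * P 1 0 = (-1) ^ n * a * -β ∧
        -β * P 0 1 + α * P 1 1 = (-1) ^ n * a * α := by
    intro n
    induction n with
    | zero => intro M _; exact ⟨1, by simp, 1, by simp⟩
    | succ n ih =>
      intro M hM
      obtain ⟨P, hP, b, h1, h2, h3, h4⟩ := ih (fun i => M i.succ) fun i => hM i.succ
      obtain ⟨a, g1, g2, g3, g4⟩ := hM 0
      refine ⟨_, rfl, a * b, ?_⟩
      rw [List.ofFn_succ, List.prod_cons, hP]
      simp only [Matrix.mul_apply, Fin.sum_univ_two]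
      refine ⟨?_, ?_, ?_, ?_⟩
      · linear_combination M 0 0 0 * h1 + M 0 0 1 * h2 + b * g1
      · linear_combination M 0 1 0 * h1 + M 0 1 1 * h2 + b * g2
      · linear_combination g3 * P 0 0 + g4 * P 1 0 - a * h3
      · linear_combination g3 * P 0 1 + g4 * P 1 1 - a * h4
  obtain ⟨P, hP, a, h1, h2, h3, h4⟩ := key p M hM
  rw [hP, Matrix.trace_fin_two]
  rw [hp.neg_one_pow] at h3 h4
  rcases hab with h | h
  · exact (mul_eq_zero.1 (by linear_combination h1 + h4 : α * (P 0 0 + P 1 1) = 0)).resolve_left h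
  · exact (mul_eq_zero.1 (by linear_combination h2 - h3 : β * (P 0 0 + P 1 1) = 0)).resolve_left h

lemma tpow_tEl {k : Type} [Field k] {p : ℕ} (hp : Odd p) (l : k) (i : Fin 4) :
    tpow k p (d32 k i) (tEl k p l) = 0 := by
  have hgen : ∀ A : Matrix (Fin 2) (Fin 3) k, (∀ w : Fin p → Fin 2,
      (List.ofFn fun i => ∑ c, (A.mulVec (tau k l c)) (w i) • stdG k c).prod.trace = 0) →
      tpow k p A (tEl k p l) = 0 := by
    intro A h
    refine coord_ext fun w => ?_
    rw [← h w, ← trace_expand fun i c => (A.mulVec (tau k l c)) (w i)]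
    simp [tEl, tpow]
  -- the common eigenvectors for the four faces are `(0, 1)`, `(1, 1)`, `(1, l)` and `(1, 0)`
  have hv : ∃ α β : k, (α ≠ 0 ∨ β ≠ 0) ∧ ∀ j : Fin 2, ∃ a, ∃ M : Matrix (Fin 2) (Fin 2) k,
      (∑ c, ((d32 k i).mulVec (tau k l c)) j • stdG k c) = M ∧
      M 0 0 * α + M 0 1 * β = a * α ∧ M 1 0 * α + M 1 1 * β = a * β ∧
      -β * M 0 0 + α * M 1 0 = a * β ∧ -β * M 0 1 + α * M 1 1 = -(a * α) := by
    fin_cases i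
    · refine ⟨0, 1, by simp, fun j => ⟨![-(1 - l), -l] j, _, rfl, ?_⟩⟩
      fin_cases j <;> simp [d32, tau, stdG, Fin.sum_univ_three, Matrix.mulVec, dotProduct]
    · refine ⟨1, 1, by simp, fun j => ⟨![-1, l] j, _, rfl, ?_⟩⟩
      fin_cases j <;> simp [d32, tau, stdG, Fin.sum_univ_three, Matrix.mulVec, dotProduct] <;>
        (try constructor) <;> ring
    · refine ⟨1, l, by simp, fun j => ⟨![-l, 1] j, _, rfl, ?_⟩⟩
      fin_cases j <;> simp [d32, tau, stdG, Fin.sum_univ_three, Matrix.mulVec, dotProduct] <;>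
        (try constructor) <;> ring
    · refine ⟨1, 0, by simp, fun j => ⟨![l, 1 - l] j, _, rfl, ?_⟩⟩
      fin_cases j <;> simp [d32, tau, stdG, Fin.sum_univ_three, Matrix.mulVec, dotProduct]
  obtain ⟨α, β, hab, hM⟩ := hv
  refine hgen _ fun w => trace_eq_zero hab hp _ fun i => ?_
  obtain ⟨a, M, hM, h⟩ := hM (w i)
  exact ⟨a, by rw [hM]; exact h⟩

/-- The trace of a word in `e`, `h`, `f` vanishes unless it contains `e`. -/
lemma trace_word_eq_zero {k : Type} [Field k] {p : ℕ} (hp : Odd p) {v : Fin p → Fin 3}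
    (hv : ∀ i, v i ≠ 0) : (List.ofFn fun i => stdG k (v i)).prod.trace = 0 := by
  refine trace_eq_zero (α := 0) (β := 1) (by simp) hp _ fun i => ?_
  have := hv i
  generalize v i = x at *
  fin_cases x
  · exact absurd rfl this
  · exact ⟨-1, by simp [stdG]⟩
  · exact ⟨0, by simp [stdG]⟩

/-! ### The pairing with `t_λ` as a polynomial in `λ` -/

section Poly

open Polynomial

variable {k : Type} [Field k] {q : ℕ}

/-- The pairing of the functional `psi` with `t_λ`, as a polynomial in `λ`. -/
def polyQ (k : Type) [Field k] (q : ℕ) : k[X] :=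
  ∑ w : Fin (q + 1) → Fin 3, C (psi k w) * ∑ v : Fin (q + 1) → Fin 3,
    C (List.ofFn fun i => stdG k (v i)).prod.trace * ∏ i, tau k[X] X (v i) (w i)

/-- The quotient of `polyQ` by `λ`: on the support of `psi` the word `w` has the third letter in
the first place, and the third coordinates of `τ_λ` are `λ` times `(0, 1, 2)`. -/
def polyQ1 (k : Type) [Field k] (q : ℕ) : k[X] :=
  ∑ w : Fin (q + 1) → Fin 3, C (psi k w) * ∑ v : Fin (q + 1) → Fin 3,
    C (List.ofFn fun i => stdG k (v i)).prod.trace *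
      ∏ i, if i = 0 then C ((![0, 1, 2] : Fin 3 → k) (v i)) else tau k[X] X (v i) (w i)

lemma polyQ_eq : polyQ k q = X * polyQ1 k q := by
  unfold polyQ polyQ1
  rw [Finset.mul_sum]
  refine Finset.sum_congr rfl fun w _ => ?_
  rw [mul_left_comm]
  by_cases hw : w 0 = 2
  · congr 1
    rw [Finset.mul_sum]
    refine Finset.sum_congr rfl fun v _ => ?_
    rw [mul_left_comm]
    congr 1
    rw [Fin.prod_univ_succ, Fin.prod_univ_succ]
    simp only [Fin.succ_ne_zero, if_true, if_false]
    rw [← mul_assoc, hw]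
    congr 1
    generalize v 0 = x
    fin_cases x
    · simp [tau]
    · simp [tau]
    · have : tau k[X] X 2 2 = X * C 2 := by
        rw [show (C 2 : k[X]) = 2 from map_ofNat C 2]
        simp [tau, mul_comm (2 : k[X])]
      simpa using this
  · simp [psi, hw]

lemma eval_tau (l : k) (c d : Fin 3) : (tau k[X] X c d).eval l = tau k l c d := by
  fin_cases c <;> fin_cases d <;> simp [tau]

lemma eval_polyQ (l : k) :
    (polyQ k q).eval l = ∑ w : Fin (q + 1) → Fin 3, psi k w * coord k w (tEl k (q + 1) l) := by
  unfold polyQ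
  simp only [eval_finsetSum, eval_mul, eval_C, eval_prod, eval_tau, coord_tEl]

lemma eval_polyQ_eq_zero (l : k) (c : Fin 3) (h : ∀ d, tau k l d c = 0) :
    (polyQ k q).eval l = 0 := by
  rw [eval_polyQ]
  refine Finset.sum_eq_zero fun w _ => ?_
  by_cases hw : ∃ i, w i = c
  · obtain ⟨i, hi⟩ := hw
    rw [coord_tEl, Finset.sum_eq_zero, mul_zero]
    intro v _
    rw [Finset.prod_eq_zero (Finset.mem_univ i), mul_zero]
    rw [hi, h]
  · push Not at hw
    rw [psi_eq_zero hw, zero_mul]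

/-- The degree is less than `p`: coordinates of `τ_λ` are at most linear in `λ`, those of `τ_λ(b₁)`
are constant, and a word in `e`, `h`, `f` with nonzero trace contains `e`. -/
lemma natDegree_polyQ (hp : Odd (q + 1)) : (polyQ k q).natDegree ≤ q := by
  unfold polyQ
  refine natDegree_sum_le_of_forall_le _ _ fun w _ => ?_
  refine (natDegree_C_mul_le _ _).trans ?_
  refine natDegree_sum_le_of_forall_le _ _ fun v _ => ?_
  by_cases hv : ∃ i, v i = 0
  · refine (natDegree_C_mul_le _ _).trans ((natDegree_prod_le _ _).trans ?_)
    obtain ⟨i, hi⟩ := hv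
    have h1 : ∀ c d : Fin 3, (tau k[X] X c d).natDegree ≤ 1 := by
      intro c d
      fin_cases c <;> fin_cases d <;> simp [tau] <;> compute_degree
    have h0 : ∀ d : Fin 3, (tau k[X] X 0 d).natDegree = 0 := by
      intro d
      fin_cases d <;> simp [tau]
    rw [← Finset.add_sum_erase _ _ (Finset.mem_univ i), hi, h0, zero_add]
    refine (Finset.sum_le_card_nsmul _ _ 1 fun j _ => h1 _ _).trans ?_
    simp
  · push Not at hv
    rw [trace_word_eq_zero hp hv]
    simp

/-- The entries of a product of upper triangular matrices. -/
lemma upper_prod (n : ℕ) (a b d : Fin n → k) :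
    (List.ofFn fun i => !![a i, b i; 0, d i]).prod =
      !![∏ i, a i, ∑ j, b j * ∏ i, (if i < j then a i else if j < i then d i else 1);
        0, ∏ i, d i] := by
  induction n with
  | zero => ext i j; fin_cases i <;> fin_cases j <;> simp
  | succ n ih =>
    rw [List.ofFn_succ, List.prod_cons, ih, Fin.sum_univ_succ]
    simp only [Fin.prod_univ_succ, Fin.succ_lt_succ_iff, Fin.succ_pos, Fin.not_lt_zero, if_true,
      if_false, lt_irrefl, one_mul, Matrix.mul_fin_two]
    ext i j
    fin_cases i <;> fin_cases j <;> simp [Finset.mul_sum, mul_left_comm, add_comm]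

/-- At `λ = 0` the matrix attached to the first letter is `-2e`, to the second `h`, to the third
`0`, except that the third letter in the first place contributes `h + 2f`. As the word contains the
first letter, the product of the other matrices is strictly upper triangular. -/
lemma eval_polyQ1 : (polyQ1 k q).eval 0 = ∑ w : Fin (q + 1) → Fin 3, psi k w *
    (2 * ∑ j : Fin q, (![-2, 0, 0] : Fin 3 → k) (w j.succ) * ∏ i : Fin q,
      (if i < j then (![0, 1, 0] : Fin 3 → k) (w i.succ) else
        if j < i then -(![0, 1, 0] : Fin 3 → k) (w i.succ) else 1)) := by
  unfold polyQ1
  simp only [eval_finsetSum, eval_mul, eval_C, eval_prod]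
  refine Finset.sum_congr rfl fun w _ => ?_
  by_cases hw : ∃ i, w i = 0
  swap
  · push Not at hw
    rw [psi_eq_zero hw, zero_mul, zero_mul]
  by_cases hw2 : w 0 = 2
  swap
  · simp [psi, hw2]
  congr 1
  have h1 : ∀ (v : Fin (q + 1) → Fin 3) i,
      (if i = 0 then C ((![0, 1, 2] : Fin 3 → k) (v i)) else tau k[X] X (v i) (w i)).eval 0
        = (if i = 0 then (![0, 1, 2] : Fin 3 → k) (v i) else tau k 0 (v i) (w i)) := by
    intro v i
    split_ifs
    · simp
    · rw [eval_tau]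
  simp only [h1]
  rw [trace_expand (fun i c => if i = 0 then (![0, 1, 2] : Fin 3 → k) c else tau k 0 c (w i)),
    List.ofFn_succ, List.prod_cons]
  have h2 : ∀ i : Fin q, (∑ c, (if i.succ = 0 then (![0, 1, 2] : Fin 3 → k) c else
      tau k 0 c (w i.succ)) • stdG k c) = !![(![0, 1, 0] : Fin 3 → k) (w i.succ),
        (![-2, 0, 0] : Fin 3 → k) (w i.succ); 0, -(![0, 1, 0] : Fin 3 → k) (w i.succ)] := by
    intro i
    simp only [Fin.succ_ne_zero, if_false]
    generalize w i.succ = x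
    ext a b
    fin_cases x <;> fin_cases a <;> fin_cases b <;> simp [tau, stdG, Fin.sum_univ_three]
  simp only [h2]
  rw [upper_prod]
  obtain ⟨i, hi⟩ := hw
  have hi0 : i ≠ 0 := by rintro rfl; rw [hi] at hw2; exact absurd hw2 (by decide)
  obtain ⟨i, rfl⟩ := Fin.exists_succ_eq.2 hi0
  rw [Finset.prod_eq_zero (Finset.mem_univ i) (by rw [hi]; rfl),
    Finset.prod_eq_zero (Finset.mem_univ i) (by rw [hi]; simp)]
  simp [Fin.sum_univ_three, stdG, Matrix.trace_fin_two]

/-- The word with the third letter in the first place, the first letter in place `j + 1`, and the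
second letter elsewhere. -/
def wj {q : ℕ} (j : Fin q) : Fin (q + 1) → Fin 3 :=
  Fin.cons 2 fun i => if i = j then 0 else 1

lemma psi_wj (hq : 2 ≤ q) (j : Fin q) : psi k (wj j) = (j : ℕ) + 1 := by
  have hs : Function.Surjective (wj j) := by
    obtain ⟨i, hi⟩ : ∃ i : Fin q, i ≠ j := by
      have : Nontrivial (Fin q) := Fin.nontrivial_iff_two_le.2 hq
      exact exists_ne j
    intro c
    fin_cases c
    exacts [⟨j.succ, by simp [wj]⟩, ⟨i.succ, by simp [wj, hi]⟩, ⟨0, rfl⟩]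
  have h2 : fib (wj j) 2 = {0} := by
    ext i
    rw [mem_fib, Finset.mem_singleton]
    cases i using Fin.cases with
    | zero => simp [wj]
    | succ i =>
      simp only [wj, Fin.cons_succ, Fin.succ_ne_zero, iff_false]
      split_ifs <;> decide
  have h0 : fib (wj j) 0 = {j.succ} := by
    ext i
    rw [mem_fib, Finset.mem_singleton]
    cases i using Fin.cases with
    | zero => simpa [wj] using (Fin.succ_ne_zero j).symm
    | succ i => simp [wj]
  have : wj j 0 = 2 := rfl
  simp [psi, Phi, hs, h0, h2, mean, this]

/-- In the double sum over words and positions only the words `wj j` survive, with `j` the position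
of the letter contributing `-2e`. -/
lemma eval_polyQ1' (hq : 2 ≤ q) : (polyQ1 k q).eval 0 =
    ∑ j : Fin q, (-4 : k) * (((j : ℕ) + 1) * (-1) ^ (q - 1 - (j : ℕ))) := by
  rw [eval_polyQ1]
  simp only [Finset.mul_sum]
  rw [Finset.sum_comm]
  refine Finset.sum_congr rfl fun j _ => ?_
  rw [Finset.sum_eq_single (wj j)]
  · have h : ∀ i : Fin q, (if i < j then (![0, 1, 0] : Fin 3 → k) (wj j i.succ) else
        if j < i then -(![0, 1, 0] : Fin 3 → k) (wj j i.succ) else 1)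
          = if i ∈ Finset.Ioi j then -1 else 1 := by
      intro i
      rcases lt_trichotomy i j with h | h | h
      · simp [h, h.not_gt, wj, h.ne]
      · simp [h]
      · simp [h, h.not_gt, wj, h.ne']
    simp only [h]
    rw [Finset.prod_ite_mem, Finset.univ_inter, Finset.prod_const, Fin.card_Ioi, psi_wj hq]
    simp [wj]
    ring
  · intro w _ hw
    by_cases h0 : w 0 = 2
    swap
    · simp [psi, h0]
    by_cases hj : w j.succ = 0
    swap
    · have : (![-2, 0, 0] : Fin 3 → k) (w j.succ) = 0 := by
        generalize w j.succ = x at *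
        fin_cases x
        · exact absurd rfl hj
        · rfl
        · rfl
      rw [this]; ring
    obtain ⟨i, hi⟩ : ∃ i, w i ≠ wj j i := by
      by_contra! h
      exact hw (funext h)
    cases i using Fin.cases with
    | zero => exact absurd h0 hi
    | succ i =>
      have hij : i ≠ j := by rintro rfl; exact hi (by simp [wj, hj])
      have h1 : (![0, 1, 0] : Fin 3 → k) (w i.succ) = 0 := by
        simp only [wj, Fin.cons_succ, hij, if_false] at hi
        generalize w i.succ = x at *
        fin_cases x
        · rfl
        · exact absurd rfl hi
        · rfl
      rw [Finset.prod_eq_zero (Finset.mem_univ i)]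
      · ring
      · rw [h1]
        rcases lt_or_gt_of_ne hij with h | h
        · simp [h]
        · simp [h, h.not_gt]
  · simp

lemma alt_sum (r : ℕ) :
    ∑ j ∈ Finset.range (2 * r), ((j : k) + 1) * (-1) ^ (2 * r - 1 - j) = r := by
  induction r with
  | zero => simp
  | succ r ih =>
    rw [show 2 * (r + 1) = 2 * r + 1 + 1 by ring, Finset.sum_range_succ, Finset.sum_range_succ]
    have : ∑ j ∈ Finset.range (2 * r), ((j : k) + 1) * (-1) ^ (2 * r + 1 + 1 - 1 - j) = r := by
      rw [← ih]
      refine Finset.sum_congr rfl fun j hj => ?_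
      have := Finset.mem_range.1 hj
      rw [show 2 * r + 1 + 1 - 1 - j = (2 * r - 1 - j) + 2 by omega, pow_add]
      simp
    rw [this, show 2 * r + 1 + 1 - 1 - 2 * r = 1 by omega,
      show 2 * r + 1 + 1 - 1 - (2 * r + 1) = 0 by omega]
    push_cast
    ring

/-- The linear coefficient of `polyQ` is `-4 · (p - 1) / 2 = 2` in characteristic `p = q + 1`. -/
lemma eval_polyQ1_eq [CharP k (q + 1)] (hq : 2 ≤ q) (hp : Odd (q + 1)) :
    (polyQ1 k q).eval 0 = 2 := by
  rw [eval_polyQ1' hq, ← Finset.mul_sum,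
    Fin.sum_univ_eq_sum_range fun j => ((j : k) + 1) * (-1) ^ (q - 1 - j)]
  obtain ⟨r, hr⟩ := hp
  obtain rfl : q = 2 * r := by omega
  rw [alt_sum]
  have : ((2 * r + 1 : ℕ) : k) = 0 := CharP.cast_eq_zero k _
  push_cast at this
  linear_combination -2 * this

/-- `psi` pairs nontrivially with `t_λ` for some `λ` different from `0` and `1`. -/
lemma exists_pairing_ne_zero [Fintype k] [CharP k (q + 1)] (hq : 2 ≤ q) (hp : Odd (q + 1)) :
    ∃ l : k, l ≠ 0 ∧ l ≠ 1 ∧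
      ∑ w : Fin (q + 1) → Fin 3, psi k w * coord k w (tEl k (q + 1) l) ≠ 0 := by
  by_contra! H
  have hQ : polyQ k q = 0 := by
    refine eq_zero_of_natDegree_lt_card_of_eval_eq_zero _ (f := id) Function.injective_id
      (fun l => ?_) ?_
    · by_cases h0 : l = 0
      · subst h0
        exact eval_polyQ_eq_zero _ 2 fun d => by fin_cases d <;> simp [tau]
      by_cases h1 : l = 1
      · subst h1
        exact eval_polyQ_eq_zero _ 1 fun d => by fin_cases d <;> simp [tau]
      · rw [id, eval_polyQ, H l h0 h1]
    · have hc : q + 1 ≤ Fintype.card k := by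
        refine Nat.le_of_dvd Fintype.card_pos ?_
        rw [← CharP.cast_eq_zero_iff k (q + 1)]
        exact Nat.cast_card_eq_zero k
      exact lt_of_le_of_lt (natDegree_polyQ hp) hc
  rw [polyQ_eq] at hQ
  have h2 := eval_polyQ1_eq (k := k) hq hp
  rw [(mul_eq_zero.1 hQ).resolve_left X_ne_zero, eval_zero] at h2
  have h := (CharP.cast_eq_zero_iff k (q + 1) 2).1 (by exact_mod_cast h2.symm)
  exact absurd (Nat.le_of_dvd (by norm_num) h) (by omega)

end Poly

/-- Pairing a function on words with the image of a tensor under a map of basis vectors. -/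
lemma sum_face {k : Type} [Field k] {q : ℕ} (A : Matrix (Fin 3) (Fin 4) k) (f : Fin 4 → Fin 3)
    (hA : ∀ a b, A a b = if f b = a then 1 else 0) (u : TP k (q + 1) 4)
    (hu : tpow k (q + 1) A u = 0) : ∑ v, psi k (f ∘ v) * coord k v u = 0 := by
  have h : ∑ w : Fin (q + 1) → Fin 3, psi k w * coord k w (tpow k (q + 1) A u) = 0 := by
    simp [hu]
  simp only [coord_tpow_fun A f hA, Finset.mul_sum] at h
  rw [Finset.sum_comm] at h
  rw [← h]
  refine Finset.sum_congr rfl fun v _ => ?_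
  simp

theorem statement0 (k : Type) [Field k] [Fintype k] (p : ℕ) [Fact p.Prime] [CharP k p]
    (hp3 : 3 ≤ p) :
    ∃ l : k, l ≠ 0 ∧ l ≠ 1 ∧
      (∀ i : Fin 4, tpow k p (d32 k i) (tEl k p l) = 0) ∧
      ¬ ∃ u : TP k p 4, cyc k p 4 u = u ∧ tpow k p (d43 k 0) u = tEl k p l ∧
          ∀ i : Fin 5, i ≠ 0 → tpow k p (d43 k i) u = 0 := by
  have hodd : Odd p := (Fact.out : p.Prime).odd_of_ne_two (by omega)
  obtain ⟨q, rfl⟩ : ∃ q, p = q + 1 := ⟨p - 1, by omega⟩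
  have hq : 2 ≤ q := by omega
  obtain ⟨l, h0, h1, hl⟩ := exists_pairing_ne_zero (k := k) hq hodd
  refine ⟨l, h0, h1, tpow_tEl hodd l, ?_⟩
  rintro ⟨u, hcyc, hd0, hd⟩
  apply hl
  have e0 : ∀ w : Fin (q + 1) → Fin 3,
      coord k w (tEl k (q + 1) l) = coord k (Fin.succ ∘ w) u := by
    intro w
    rw [← hd0]
    refine coord_tpow_incl _ _ (fun a b => ?_) u w
    fin_cases a <;> fin_cases b <;> simp [d43]
  have e4 : ∀ w : Fin (q + 1) → Fin 3, coord k (Fin.castSucc ∘ w) u = 0 := by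
    intro w
    have h := congrArg (coord k w) (hd 4 (by decide))
    rw [map_zero] at h
    rw [← h]
    refine (coord_tpow_incl _ _ (fun a b => ?_) u w).symm
    fin_cases a <;> fin_cases b <;> simp [d43]
  simp only [e0]
  refine key hq (fun v => coord k v u) (fun j v => coord_rot u hcyc j v) ?_
    (sum_face _ f1 ?_ u (hd 1 (by decide))) (sum_face _ f2 ?_ u (hd 2 (by decide)))
    (sum_face _ f3 ?_ u (hd 3 (by decide)))
  · intro v hv
    rw [← e4 fun i => (v i).castPred (hv i)]
    congr 2
  all_goals
    intro a b
    fin_cases a <;> fin_cases b <;> simp [d43, f1, f2, f3]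
end
end

section
/- One has t_0 = 0 and t_1 = 0, i.e. the element t_λ ∈ (k^3)^{⊗p} vanishes for λ = 0 and for λ = 1. -/
/-!
Expanding every `τ_λ(b_a)` in the standard basis and using multilinearity of the product of matrices
gives `t_λ = Σ_v tr(M_{v 1} ⋯ M_{v p}) • b_{v 1} ⊗ ⋯ ⊗ b_{v p}`, where `M_j = Σ_a τ_λ(b_a)_j G_a`
(`tEl_eq_sum`). For `λ = 0` and for `λ = 1` the matrices `M_1, M_2, M_3` have a common eigenvector,
namely `(1, 0)` and `(1, 1)` respectively, and each `M_j` has trace zero. So they are simultaneously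
triangular with diagonal `(μ, -μ)`. A product of `p` of them is then triangular with diagonal
`(μ, (-1)^p μ)`, which has trace zero because `p` is odd.
-/

open scoped TensorProduct
open PiTensorProduct

noncomputable section

/-- `A` has the eigenvector `(1, c)`, and it acts on the quotient by this line as `s` times
its eigenvalue `A 0 0 + c * A 0 1`. -/
def TriangularRatio {R : Type} [CommRing R] (c s : R) (A : Matrix (Fin 2) (Fin 2) R) : Prop :=
  A 1 0 + c * A 1 1 = c * (A 0 0 + c * A 0 1) ∧ A 1 1 - c * A 0 1 = s * (A 0 0 + c * A 0 1)

lemma TriangularRatio.mul {R : Type} [CommRing R] {c s s' : R} {A B : Matrix (Fin 2) (Fin 2) R}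
    (hA : TriangularRatio c s A) (hB : TriangularRatio c s' B) :
    TriangularRatio c (s * s') (A * B) := by
  obtain ⟨a1, a2⟩ := hA
  obtain ⟨b1, b2⟩ := hB
  simp only [TriangularRatio, Matrix.mul_apply, Fin.sum_univ_two]
  constructor
  · linear_combination (B 0 0 + c * B 0 1) * a1 + (A 1 1 - c * A 0 1) * b1
  · linear_combination B 0 1 * a1 + (B 1 1 - c * B 0 1) * a2 +
      s * (A 0 0 + c * A 0 1) * b2 - s * s' * A 0 1 * b1

lemma TriangularRatio.list_prod {R : Type} [CommRing R] {c s : R}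
    (L : List (Matrix (Fin 2) (Fin 2) R)) (h : ∀ A ∈ L, TriangularRatio c s A) :
    TriangularRatio c (s ^ L.length) L.prod := by
  induction L with
  | nil => simp [TriangularRatio]
  | cons A L ih =>
    rw [List.prod_cons, List.length_cons, pow_succ']
    exact (h A (by simp)).mul (ih fun B hB => h B (by simp [hB]))

lemma TriangularRatio.trace_eq_zero {R : Type} [CommRing R] {c : R}
    {A : Matrix (Fin 2) (Fin 2) R} (h : TriangularRatio c (-1) A) : A.trace = 0 := by
  rw [Matrix.trace_fin_two]
  linear_combination h.2

/-- The matrix `M_j = Σ_a τ_λ(b_a)_j G_a`, the image of `b_j` when the linear map `b_a ↦ G_a` is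
precomposed with the transpose of `τ_λ`. -/
def transposedG (R : Type) [CommRing R] (l : R) (j : Fin 3) : Matrix (Fin 2) (Fin 2) R :=
  ∑ a, tau R l a j • stdG R a

/-- The coordinates of `t_λ` in the standard basis of the tensor power. -/
lemma tEl_eq_sum (R : Type) [CommRing R] (p : ℕ) (l : R) :
    tEl R p l = ∑ v : Fin p → Fin 3, (List.ofFn fun i => transposedG R l (v i)).prod.trace •
      tprod R fun i => (Pi.single (v i) 1 : Fin 3 → R) := by
  have h1 : ∀ w : Fin p → Fin 3, (tprod R fun i => tau R l (w i)) =
      ∑ v : Fin p → Fin 3, (∏ i, tau R l (w i) (v i)) •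
        tprod R fun i => (Pi.single (v i) 1 : Fin 3 → R) := by
    intro w
    have h : (fun i => tau R l (w i)) =
        fun i => ∑ j, tau R l (w i) j • (Pi.single j 1 : Fin 3 → R) := by
      funext i
      exact pi_eq_sum_univ' _
    rw [h, MultilinearMap.map_sum]
    exact Finset.sum_congr rfl fun v _ => MultilinearMap.map_smul_univ _ _ _
  have h2 : ∀ v : Fin p → Fin 3, (List.ofFn fun i => transposedG R l (v i)).prod =
      ∑ w : Fin p → Fin 3, (∏ i, tau R l (w i) (v i)) •
        (List.ofFn fun i => stdG R (w i)).prod := by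
    intro v
    simp only [transposedG, ← MultilinearMap.mkPiAlgebraFin_apply (R := R)]
    rw [MultilinearMap.map_sum]
    exact Finset.sum_congr rfl fun w _ => MultilinearMap.map_smul_univ _ _ _
  simp only [tEl, h1, h2, Matrix.trace_sum, Matrix.trace_smul, Finset.smul_sum, Finset.sum_smul]
  rw [Finset.sum_comm]
  refine Finset.sum_congr rfl fun v _ => Finset.sum_congr rfl fun w _ => ?_
  rw [smul_smul, smul_eq_mul, mul_comm]

lemma tEl_eq_zero {R : Type} [CommRing R] {p : ℕ} (hp : Odd p) {l : R} (c : R)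
    (h : ∀ j, TriangularRatio c (-1) (transposedG R l j)) : tEl R p l = 0 := by
  rw [tEl_eq_sum]
  refine Finset.sum_eq_zero fun v _ => ?_
  have := TriangularRatio.list_prod (c := c) (s := -1)
    (List.ofFn fun i => transposedG R l (v i)) (by
      intro A hA
      obtain ⟨i, rfl⟩ := (List.mem_ofFn' _ _).1 hA
      exact h _)
  rw [List.length_ofFn, hp.neg_one_pow] at this
  rw [this.trace_eq_zero, zero_smul]

theorem statement1 (k : Type) [Field k] [Fintype k] (p : ℕ) [Fact p.Prime] [CharP k p]
    (hp3 : 3 ≤ p) :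
    tEl k p (0 : k) = 0 ∧ tEl k p (1 : k) = 0 := by
  have hp : Odd p := (Fact.out : p.Prime).odd_of_ne_two (by omega)
  constructor
  · refine tEl_eq_zero hp 0 fun j => ?_
    fin_cases j <;> simp [TriangularRatio, transposedG, tau, stdG, Fin.sum_univ_three]
  · refine tEl_eq_zero hp 1 fun j => ?_
    fin_cases j <;> simp [TriangularRatio, transposedG, tau, stdG, Fin.sum_univ_three] <;> norm_num
end
end

section
/- For every λ ∈ k and every i ∈ {0,1,2,3}, one has d_i^{⊗p}(t_λ) = 0 in (k^2)^{⊗p}. -/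
/-!
Expanding in the standard basis of `(k²)^{⊗p}`, the coefficient of `d_i^{⊗p}(t_λ)` at
`b_{a 1} ⊗ ⋯ ⊗ b_{a p}` is `tr (N_{a 1} ⋯ N_{a p})`, where `N_r = Σ_j (d_i τ_λ b_j)_r • G_j`
(`tpow_tEl_eq_sum`). For each `i` the two traceless matrices `N_0`, `N_1` have a common eigenvector:
`(0,1)`, `(1,1)`, `(1,λ)`, `(1,0)` for `i = 0, 1, 2, 3`. Hence they are simultaneously triangular
with diagonals of the form `(x, -x)`, so a product of `p` of them is triangular with
diagonal `(y, (-1)^p y)`, and its trace vanishes because `p` is odd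
(`trace_prod_eq_zero`).
-/


open scoped TensorProduct
open PiTensorProduct

noncomputable section

/-- Invariant of a product of traceless matrices with common eigenvector `v`: the eigenvalue `x` on
`v` and the eigenvalue on the quotient by `v` (read off from the linear form `(-v₁, v₀)` killing `v`)
differ by the sign `(-1)^n`, with `n` the number of factors. -/
lemma prod_eigen {k : Type} [Field k] (v : Fin 2 → k) (L : List (Matrix (Fin 2) (Fin 2) k))
    (hL : ∀ M ∈ L, ∃ x : k, M.mulVec v = x • v ∧
      Matrix.vecMul ![-v 1, v 0] M = (-x) • ![-v 1, v 0]) :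
    ∃ x : k, L.prod.mulVec v = x • v ∧
      Matrix.vecMul ![-v 1, v 0] L.prod = ((-1) ^ L.length * x) • ![-v 1, v 0] := by
  induction L with
  | nil => exact ⟨1, by simp, by simp⟩
  | cons M L ih =>
    obtain ⟨x, hx, hx'⟩ := hL M (by simp)
    obtain ⟨y, hy, hy'⟩ := ih fun M hM => hL M (by simp [hM])
    refine ⟨x * y, ?_, ?_⟩
    · rw [List.prod_cons, ← Matrix.mulVec_mulVec, hy, Matrix.mulVec_smul, hx, smul_smul, mul_comm]
    · rw [List.prod_cons, ← Matrix.vecMul_vecMul, hx', Matrix.smul_vecMul, hy', smul_smul]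
      congr 1
      rw [List.length_cons]
      ring

lemma trace_prod_eq_zero {k : Type} [Field k] (v : Fin 2 → k) (hv : v 0 ≠ 0 ∨ v 1 ≠ 0)
    (L : List (Matrix (Fin 2) (Fin 2) k)) (hodd : Odd L.length)
    (hL : ∀ M ∈ L, ∃ x : k, M.mulVec v = x • v ∧
      Matrix.vecMul ![-v 1, v 0] M = (-x) • ![-v 1, v 0]) :
    L.prod.trace = 0 := by
  obtain ⟨x, h, h'⟩ := prod_eigen v L hL
  rw [hodd.neg_one_pow] at h'
  generalize L.prod = M at h h'
  have h0 := congrFun h 0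
  have h1 := congrFun h 1
  have h2 := congrFun h' 0
  have h3 := congrFun h' 1
  simp [Matrix.mulVec, Matrix.vecMul, dotProduct, Fin.sum_univ_two] at h0 h1 h2 h3
  rw [Matrix.trace_fin_two]
  rcases hv with hv | hv
  · apply mul_left_cancel₀ hv
    linear_combination h0 + h3
  · apply mul_left_cancel₀ hv
    linear_combination h1 - h2

/-- The coefficients of `A^{⊗p}(t_λ)` in the standard basis are traces of products of the
matrices `N_r = Σ_j (A τ_λ b_j)_r • G_j`. -/
lemma tpow_tEl_eq_sum (k : Type) [Field k] (p : ℕ) (l : k) {m : ℕ} (A : Matrix (Fin m) (Fin 3) k) :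
    tpow k p A (tEl k p l) = ∑ a : Fin p → Fin m,
      (List.ofFn fun i => ∑ j, (A.mulVec (tau k l j)) (a i) • stdG k j).prod.trace •
        tprod k fun i => (Pi.single (a i) 1 : Fin m → k) := by
  have hcoef : ∀ a : Fin p → Fin m,
      (List.ofFn fun i => ∑ j, (A.mulVec (tau k l j)) (a i) • stdG k j).prod.trace =
        ∑ w : Fin p → Fin 3, (∏ i, A.mulVec (tau k l (w i)) (a i)) *
          (List.ofFn fun i => stdG k (w i)).prod.trace := by
    intro a
    rw [← MultilinearMap.mkPiAlgebraFin_apply (R := k), MultilinearMap.map_sum, Matrix.trace_sum]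
    refine Finset.sum_congr rfl fun w _ => ?_
    rw [MultilinearMap.map_smul_univ, Matrix.trace_smul, MultilinearMap.mkPiAlgebraFin_apply,
      smul_eq_mul]
  have hvec : ∀ w : Fin p → Fin 3, (tprod k fun i => A.mulVec (tau k l (w i))) =
      ∑ a : Fin p → Fin m, (∏ i, A.mulVec (tau k l (w i)) (a i)) •
        tprod k fun i => (Pi.single (a i) 1 : Fin m → k) := by
    intro w
    have : (fun i => A.mulVec (tau k l (w i))) = fun i => ∑ r : Fin m,
        A.mulVec (tau k l (w i)) r • (Pi.single r 1 : Fin m → k) := by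
      funext i
      exact pi_eq_sum_univ' _
    conv_lhs => rw [this]
    rw [MultilinearMap.map_sum]
    refine Finset.sum_congr rfl fun a _ => ?_
    rw [MultilinearMap.map_smul_univ]
  simp only [tpow, tEl, map_sum, map_smul, PiTensorProduct.map_tprod, Matrix.mulVecLin_apply, hcoef,
    hvec, Finset.smul_sum, Finset.sum_smul, smul_smul]
  rw [Finset.sum_comm]
  simp only [mul_comm]

theorem statement3 (k : Type) [Field k] [Fintype k] (p : ℕ) [Fact p.Prime] [CharP k p]
    (hp3 : 3 ≤ p) (l : k) (i : Fin 4) :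
    tpow k p (d32 k i) (tEl k p l) = 0 := by
  have hodd : Odd p := (Fact.out : p.Prime).odd_of_ne_two (by omega)
  rw [tpow_tEl_eq_sum]
  refine Finset.sum_eq_zero fun a _ => ?_
  -- `v` is the common eigenvector and `x r` the eigenvalue of `N_r` on it.
  suffices h : ∃ v : Fin 2 → k, (v 0 ≠ 0 ∨ v 1 ≠ 0) ∧ ∃ x : Fin 2 → k, ∀ r,
      (∑ j, ((d32 k i).mulVec (tau k l j)) r • stdG k j).mulVec v = x r • v ∧
      Matrix.vecMul ![-v 1, v 0] (∑ j, ((d32 k i).mulVec (tau k l j)) r • stdG k j) =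
        (-x r) • ![-v 1, v 0] by
    obtain ⟨v, hv, x, hx⟩ := h
    rw [trace_prod_eq_zero v hv _ (by simpa using hodd), zero_smul]
    intro M hM
    obtain ⟨j, rfl⟩ := List.mem_ofFn.mp hM
    exact ⟨x (a j), hx (a j)⟩
  fin_cases i
  on_goal 1 => refine ⟨![0, 1], by simp, ![-(1 - l), -l], fun r => ?_⟩
  on_goal 2 => refine ⟨![1, 1], by simp, ![-1, l], fun r => ?_⟩
  on_goal 3 => refine ⟨![1, l], by simp, ![-l, 1], fun r => ?_⟩
  on_goal 4 => refine ⟨![1, 0], by simp, ![l, 1 - l], fun r => ?_⟩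
  all_goals
    fin_cases r <;> constructor <;> ext s <;> fin_cases s <;>
      simp [d32, tau, stdG, Matrix.mulVec, Matrix.vecMul, dotProduct, Fin.sum_univ_succ] <;> ring
end
end

section
/- Let q ≥ 1 and g_1, ..., g_q ∈ {e, h, f} ⊂ M_2(Z), with g_i ≠ h for at least one i. Let i_1 < i_2 < ⋯ < i_r be the positions j with g_j ≠ h. Then tr(g_1 g_2 ⋯ g_q) ∈ {-1, 0, 1}, and tr(g_1 g_2 ⋯ g_q) ≠ 0 if and only if r is even, r ≥ 2, and the letters g_{i_1}, ..., g_{i_r} alternate cyclically between e and f (that is, g_{i_j} ≠ g_{i_{j+1}} for j = 1, ..., r-1 and g_{i_r} ≠ g_{i_1}). -/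
/-!
Write `E a b` for the matrix units of `M₂(ℤ)`, so that `e = E 0 1` and `f = E 1 0`.  Since
`h * e = e`, `e * h = -e`, `h * f = -f` and `f * h = f`, deleting the letters `h` from a word
with at least one other letter changes its product only by a sign (`prod_eq_sign_smul`).

For a nonempty word in `e` and `f`, the relations `e * e = f * f = 0` kill the product unless
consecutive letters differ.  If they do, the product telescopes to the matrix unit whose row is
that of the first letter and whose column is that of the last one (`word_prod`).  Its trace is `1`
when the first and last letters differ and `0` when they agree; and in an alternating word the
first and last letters differ exactly when the length is even.
-/

/-- The matrices `e`, `h`, `f` in `M₂(ℤ)`. -/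
def eM : Matrix (Fin 2) (Fin 2) ℤ := !![0, 1; 0, 0]
def hM : Matrix (Fin 2) (Fin 2) ℤ := !![1, 0; 0, -1]
def fM : Matrix (Fin 2) (Fin 2) ℤ := !![0, 0; 1, 0]

/-- The letter of `{e, f}` supported in row `a`: `e` for `a = 0` and `f` for `a = 1`. -/
def letter (a : Fin 2) : Matrix (Fin 2) (Fin 2) ℤ := Matrix.single a (a + 1) 1

theorem letter_zero : letter 0 = eM := by decide

theorem letter_one : letter 1 = fM := by decide

theorem letter_inj {a b : Fin 2} : letter a = letter b ↔ a = b := by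
  revert a b; decide

theorem letter_ne_hM (a : Fin 2) : letter a ≠ hM := by
  revert a; decide

theorem hM_mul_letter (a : Fin 2) : hM * letter a = letter a ∨ hM * letter a = -letter a := by
  revert a; decide

/-- Multiplying a letter by a matrix unit on the right either gives `0` or moves the unit to the
row of the letter; the product survives exactly when the unit sits in the other row. -/
theorem letter_mul_single (c a b : Fin 2) :
    letter c * Matrix.single a b 1 = if c = a then 0 else Matrix.single c b 1 := by
  revert a b c; decide

theorem trace_single_add_one (a b : Fin 2) :
    (Matrix.single a (b + 1) (1 : ℤ)).trace = if a = b then 0 else 1 := by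
  revert a b; decide

/-- A nonempty word in `e`, `f` has product `0` unless it alternates, and otherwise its product is
the matrix unit with the row of its first letter and the column of its last letter. -/
theorem word_prod (m : List (Matrix (Fin 2) (Fin 2) ℤ)) (hm : ∀ x ∈ m, ∃ a, x = letter a)
    (hne : m ≠ []) :
    (¬ m.IsChain (· ≠ ·) ∧ m.prod = 0) ∨
    ∃ a b, m.IsChain (· ≠ ·) ∧ m.head? = some (letter a) ∧ m.getLast? = some (letter b) ∧
      m.prod = Matrix.single a (b + 1) 1 ∧ (Even m.length ↔ a ≠ b) := by
  induction m with
  | nil => exact absurd rfl hne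
  | cons x l ih =>
    obtain ⟨c, rfl⟩ := hm x (by simp)
    rcases eq_or_ne l [] with rfl | hl
    · exact Or.inr ⟨c, c, by simp, by simp, by simp, by simp [letter], by simp⟩
    · rcases ih (fun y hy => hm y (by simp [hy])) hl with ⟨hc, hp⟩ | ⟨a, b, hc, hh, hL, hp, hev⟩
      · exact Or.inl ⟨fun h => hc h.tail, by simp [hp]⟩
      · have hchain : (letter c :: l).IsChain (· ≠ ·) ↔ c ≠ a := by
          simp [List.isChain_cons, hh, hc, letter_inj]
        by_cases hca : c = a
        · left
          exact ⟨by rw [hchain]; simpa using hca,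
            by rw [List.prod_cons, hp, letter_mul_single, if_pos hca]⟩
        · right
          refine ⟨c, b, hchain.2 hca, by simp, by simp [List.getLast?_cons, hL],
            by rw [List.prod_cons, hp, letter_mul_single, if_neg hca], ?_⟩
          rw [List.length_cons, Nat.even_add_one, hev]
          -- three elements of `Fin 2` with `c ≠ a`: `a = b` exactly when `c ≠ b`
          clear * - hca
          revert a b c; decide

/-- A word without letters other than `h` acts on the right of a letter by a sign. -/
theorem letter_mul_prod (L : List (Matrix (Fin 2) (Fin 2) ℤ)) (hL : ∀ x ∈ L, x = hM)
    (a : Fin 2) : letter a * L.prod = letter a ∨ letter a * L.prod = -letter a := by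
  have key : letter a * hM = letter a ∨ letter a * hM = -letter a := by revert a; decide
  induction L with
  | nil => simp
  | cons x l ih =>
    obtain rfl := hL x (by simp)
    rw [List.prod_cons, ← mul_assoc]
    rcases key with k | k <;> rcases ih fun y hy => hL y (by simp [hy]) with h | h <;>
      simp [k, h]

open Classical in
/-- Deleting the letters `h` from a word that has another letter changes the product by a sign. -/
theorem prod_eq_sign_smul (L : List (Matrix (Fin 2) (Fin 2) ℤ))
    (hL : ∀ x ∈ L, x = hM ∨ ∃ a, x = letter a) (hne : L.filter (· ≠ hM) ≠ []) :
    L.prod = (L.filter (· ≠ hM)).prod ∨ L.prod = -(L.filter (· ≠ hM)).prod := by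
  induction L with
  | nil => simp at hne
  | cons x l ih =>
    have ih' := ih fun y hy => hL y (by simp [hy])
    rcases hL x (by simp) with rfl | ⟨c, rfl⟩
    · have hf : (hM :: l).filter (· ≠ hM) = l.filter (· ≠ hM) := by simp
      rw [hf] at hne ⊢
      -- the sign produced by `h` is read off from the first letter different from `h`
      have hs : hM * (l.filter (· ≠ hM)).prod = (l.filter (· ≠ hM)).prod ∨
          hM * (l.filter (· ≠ hM)).prod = -(l.filter (· ≠ hM)).prod := by
        obtain ⟨y, t, ht⟩ := List.exists_cons_of_ne_nil hne
        have hy : y ∈ l.filter (· ≠ hM) := by rw [ht]; simp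
        obtain ⟨hyl, hyh⟩ := List.mem_filter.1 hy
        obtain ⟨a, rfl⟩ := (hL y (by simp [hyl])).resolve_left (by simpa using hyh)
        rw [ht, List.prod_cons, ← mul_assoc]
        rcases hM_mul_letter a with h | h <;> simp [h]
      rw [List.prod_cons]
      rcases ih' hne with h | h <;> rw [h] <;> rcases hs with k | k <;> simp only [mul_neg, k] <;>
        simp
    · have hf : (letter c :: l).filter (· ≠ hM) = letter c :: l.filter (· ≠ hM) := by
        simp [letter_ne_hM]
      rw [hf, List.prod_cons, List.prod_cons]
      by_cases hl : l.filter (· ≠ hM) = []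
      · rw [hl, List.prod_nil, mul_one]
        exact letter_mul_prod l (by simpa [List.filter_eq_nil_iff] using hl) c
      · rcases ih' hl with h | h <;> rw [h] <;> simp

open Classical in
theorem statement8 (q : ℕ) (hq : 1 ≤ q) (g : Fin q → Matrix (Fin 2) (Fin 2) ℤ)
    (hg : ∀ i, g i = eM ∨ g i = hM ∨ g i = fM) (hex : ∃ i, g i ≠ hM) :
    -- `m` is the list of the letters `g_{i₁}, …, g_{i_r}` different from `h`, in order
    (List.ofFn g).prod.trace ∈ ({-1, 0, 1} : Set ℤ) ∧
    ((List.ofFn g).prod.trace ≠ 0 ↔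
      (Even ((List.ofFn g).filter (· ≠ hM)).length ∧
       2 ≤ ((List.ofFn g).filter (· ≠ hM)).length ∧
       ((List.ofFn g).filter (· ≠ hM)).Chain' (· ≠ ·) ∧
       ((List.ofFn g).filter (· ≠ hM)).head? ≠ ((List.ofFn g).filter (· ≠ hM)).getLast?)) := by
  have hL : ∀ x ∈ List.ofFn g, x = hM ∨ ∃ a, x = letter a := by
    intro x hx
    obtain ⟨i, rfl⟩ := (List.mem_ofFn' g x).1 hx
    rcases hg i with h | h | h
    · exact Or.inr ⟨0, by rw [h, letter_zero]⟩
    · exact Or.inl h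
    · exact Or.inr ⟨1, by rw [h, letter_one]⟩
  have hne : (List.ofFn g).filter (· ≠ hM) ≠ [] := by
    obtain ⟨i, hi⟩ := hex
    exact List.ne_nil_of_mem (List.mem_filter.2 ⟨(List.mem_ofFn' g _).2 ⟨i, rfl⟩, by simpa using hi⟩)
  have hs := prod_eq_sign_smul _ hL hne
  have hm : ∀ x ∈ (List.ofFn g).filter (· ≠ hM), ∃ a, x = letter a := fun x hx =>
    (hL x (List.mem_filter.1 hx).1).resolve_left (by simpa using (List.mem_filter.1 hx).2)
  have hw := word_prod _ hm hne
  generalize (List.ofFn g).filter (· ≠ hM) = m at *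
  generalize (List.ofFn g).prod = P at *
  have ht : P.trace = m.prod.trace ∨ P.trace = -m.prod.trace := by
    rcases hs with rfl | rfl <;> simp
  rcases hw with ⟨hc, hp⟩ | ⟨a, b, hc, hh, hl, hp, hev⟩
  · have h0 : P.trace = 0 := by simpa [hp] using ht
    exact ⟨by simp [h0], fun h => absurd h0 h, fun h => absurd h.2.2.1 hc⟩
  · rw [hp, trace_single_add_one] at ht
    by_cases hab : a = b
    · have h0 : P.trace = 0 := by simpa [hab] using ht
      refine ⟨by simp [h0], fun h => absurd h0 h, fun h => absurd ?_ h.2.2.2⟩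
      rw [hh, hl, hab]
    · rw [if_neg hab] at ht
      refine ⟨by rcases ht with h | h <;> simp [h], fun _ => ⟨hev.2 hab, ?_, hc, ?_⟩,
        fun _ => by rcases ht with h | h <;> simp [h]⟩
      · have h1 := List.length_pos_iff.2 hne
        obtain ⟨k, hk⟩ := hev.2 hab
        omega
      · rw [hh, hl]
        simpa [letter_inj] using hab
end
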